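/- Let J be a g-function with log J in the Walters class W(Ω,σ) and let μ be its unique g-measure. For each n∈ℕ let J_n be a g-function such that log J_n is α_n-Hölder for some α_n∈(0,1), and let μ_n be the unique g-measure of J_n. If ‖log J_n − log J‖_∞ → 0 as n→∞, then μ_n → μ in the weak-* topology and h_{μ_n}(σ) → h_μ(σ). -/

import Mathlib

open Real MeasureTheory Filter Topology Set

open scoped Classical

namespace GS

/-- The full shift space `Ω = 𝒜^ℕ`. -/
abbrev Omega (𝒜 : Type) : Type := ℕ → 𝒜

variable {𝒜 : Type}

/-- The left shift `σ(x₁,x₂,…) = (x₂,x₃,…)`. -/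
def shift (x : Omega 𝒜) : Omega 𝒜 := fun n => x (n + 1)

/-- Prepending a symbol: `qx = (q,x₁,x₂,…)`. -/
def cons (q : 𝒜) (x : Omega 𝒜) : Omega 𝒜 := fun n => Nat.casesOn n q x

/-- Concatenation `wx` of a finite word `w ∈ 𝒜^k` with `x ∈ Ω`. -/
def concat {k : ℕ} (w : Fin k → 𝒜) (x : Omega 𝒜) : Omega 𝒜 :=
  fun n => if h : n < k then w ⟨n, h⟩ else x (n - k)

/-- The metric `d(x,y) = 2^{-N(x,y)}`, `N(x,y) = inf{k ≥ 1 : x_k ≠ y_k}`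
(sequences are indexed from `0` in Lean, whence the `+ 1`). -/
noncomputable def dOmega (x y : Omega 𝒜) : ℝ :=
  if x = y then 0 else (1 / 2 : ℝ) ^ (sInf {k : ℕ | x k ≠ y k} + 1)

/-- `a : Ω → E` is `α`-Hölder (w.r.t. `dOmega`):
`Hol_α(a) = sup_{x≠y} ‖a x - a y‖ / d(x,y)^α < ∞`. -/
def IsHolderW (α : ℝ) {E : Type*} [NormedAddCommGroup E] (a : Omega 𝒜 → E) : Prop :=
  ∃ C : ℝ, ∀ x y : Omega 𝒜, ‖a x - a y‖ ≤ C * (dOmega x y) ^ α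

/-- The Hölder constant `Hol_α(a) = sup_{x≠y} ‖a x - a y‖ / d(x,y)^α`. -/
noncomputable def HolConst (α : ℝ) {E : Type*} [NormedAddCommGroup E] (a : Omega 𝒜 → E) : ℝ :=
  sSup {r : ℝ | ∃ x y : Omega 𝒜, x ≠ y ∧ r = ‖a x - a y‖ / (dOmega x y) ^ α}

/-- `J` is a `g`-function: continuous, strictly positive, with `∑_{q∈𝒜} J(qx) = 1`. -/
def IsGFunction [Fintype 𝒜] [TopologicalSpace 𝒜] (J : Omega 𝒜 → ℝ) : Prop :=
  Continuous J ∧ (∀ x, 0 < J x) ∧ ∀ x : Omega 𝒜, ∑ q : 𝒜, J (cons q x) = 1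

/-- The Ruelle transfer operator `(L_f φ)(x) = ∑_{q∈𝒜} e^{f(qx)} φ(qx)`. -/
noncomputable def ruelle [Fintype 𝒜] {E : Type*} [AddCommMonoid E] [Module ℝ E]
    (f : Omega 𝒜 → ℝ) (φ : Omega 𝒜 → E) : Omega 𝒜 → E :=
  fun x => ∑ q : 𝒜, Real.exp (f (cons q x)) • φ (cons q x)

/-- Birkhoff sum `S_k(f) = ∑_{j=0}^{k-1} f ∘ σ^j`. -/
def birkhoff (f : Omega 𝒜 → ℝ) (k : ℕ) (x : Omega 𝒜) : ℝ :=
  ∑ j ∈ Finset.range k, f (shift^[j] x)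

/-- `𝕁(wx) = exp (S_k(log J)(wx))` for a word `w` of length `k`. -/
noncomputable def JBirk (J : Omega 𝒜 → ℝ) (k : ℕ) (w : Fin k → 𝒜) (x : Omega 𝒜) : ℝ :=
  Real.exp (birkhoff (fun z => Real.log (J z)) k (concat w x))

/-- `ζ₊(s) = ∑_{k≥1} ∑_{w∈𝒜^k} a(wx) 𝕁(wx)^s`. -/
noncomputable def zetaPlus [Fintype 𝒜] (J : Omega 𝒜 → ℝ) (a : Omega 𝒜 → ℂ) (x : Omega 𝒜)
    (s : ℝ) : ℂ :=
  ∑' k : ℕ, ∑ w : Fin (k + 1) → 𝒜, a (concat w x) * (((JBirk J (k + 1) w x) ^ s : ℝ) : ℂ)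

/-- `ζ₋(s) = ∑_{k≥1} ∑_{w∈𝒜^k} a(wy) 𝕁(wx)^s`. -/
noncomputable def zetaMinus [Fintype 𝒜] (J : Omega 𝒜 → ℝ) (a : Omega 𝒜 → ℂ) (x y : Omega 𝒜)
    (s : ℝ) : ℂ :=
  ∑' k : ℕ, ∑ w : Fin (k + 1) → 𝒜, a (concat w y) * (((JBirk J (k + 1) w x) ^ s : ℝ) : ℂ)

/-- `L_{log J}^* μ = μ`, i.e. `μ` is a `g`-measure of `J`, tested against continuous functions. -/
def IsGMeasure [Fintype 𝒜] [TopologicalSpace 𝒜] [MeasurableSpace 𝒜]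
    (J : Omega 𝒜 → ℝ) (μ : Measure (Omega 𝒜)) : Prop :=
  IsProbabilityMeasure μ ∧
    ∀ φ : Omega 𝒜 → ℂ, Continuous φ →
      ∫ x, ruelle (fun z => Real.log (J z)) φ x ∂μ = ∫ x, φ x ∂μ

/-- The cylinder set determined by a finite word. -/
def cyl {k : ℕ} (w : Fin k → 𝒜) : Set (Omega 𝒜) := {x | ∀ i : Fin k, x (i : ℕ) = w i}

/-- Entropy of the partition into cylinders of length `n`. -/
noncomputable def blockEntropy [Fintype 𝒜] [MeasurableSpace 𝒜] (μ : Measure (Omega 𝒜))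
    (n : ℕ) : ℝ :=
  ∑ w : Fin n → 𝒜, Real.negMulLog (μ (cyl w)).toReal

/-- Kolmogorov–Sinai entropy `h_μ(σ)` of a shift-invariant measure, computed through the
generating partition into cylinders: `h_μ(σ) = lim_n H_n/n = inf_{n≥1} H_n/n`. -/
noncomputable def KSentropy [Fintype 𝒜] [MeasurableSpace 𝒜] (μ : Measure (Omega 𝒜)) : ℝ :=
  ⨅ n : ℕ, blockEntropy μ (n + 1) / (n + 1)

/-- Topological pressure `P(f) = sup {h_μ(σ) + ∫ f dμ}` over shift-invariant Borel
probability measures. -/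
noncomputable def pressure [Fintype 𝒜] [MeasurableSpace 𝒜] (f : Omega 𝒜 → ℝ) : ℝ :=
  sSup {r : ℝ | ∃ μ : Measure (Omega 𝒜), IsProbabilityMeasure μ ∧
    Measure.map shift μ = μ ∧ r = KSentropy μ + ∫ x, f x ∂μ}

/-- `μ` is an equilibrium state of `f`. -/
def IsEquilibrium [Fintype 𝒜] [MeasurableSpace 𝒜] (f : Omega 𝒜 → ℝ)
    (μ : Measure (Omega 𝒜)) : Prop :=
  IsProbabilityMeasure μ ∧ Measure.map shift μ = μ ∧
    KSentropy μ + ∫ x, f x ∂μ = pressure f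

/-- The Walters class `W(Ω,σ)`:
`sup_{n≥1} sup_{w∈𝒜^n} |S_n(f)(wx) − S_n(f)(wy)| → 0` as `d(x,y) → 0`. -/
def WaltersClass [TopologicalSpace 𝒜] (f : Omega 𝒜 → ℝ) : Prop :=
  Continuous f ∧ ∀ ε > (0:ℝ), ∃ δ > (0:ℝ), ∀ x y : Omega 𝒜, dOmega x y < δ →
    ∀ (n : ℕ) (w : Fin n → 𝒜),
      |birkhoff f n (concat w x) - birkhoff f n (concat w y)| ≤ ε

/-- The set `W*` of finite (nonempty) words over `𝒜`. -/
def Words (𝒜 : Type) : Type := Σ k : ℕ, Fin (k + 1) → 𝒜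

end GS

/-!
By compactness of the space of probability measures on `Ω`, a sequence of `g`-measures converges
as soon as it has a single cluster point, and uniform convergence of `log J_n` makes every cluster
point a `g`-measure of `J`, hence equal to `μ`.

The entropy is continuous because of Rokhlin's formula `h_μ(σ) = -∫ log J dμ`: both sides of
`h_{μ_n}(σ) = -∫ log J_n dμ_n` then pass to the limit. To prove it, write the increments of the
block entropy as `H_{n+1} - H_n = ∑_w ∑_q μ[w] η(A_{w,q})`, where `η(t) = -t log t` and `A_{w,q}` is
the mean of `J(q·)` over the cylinder `[w]`. Jensen's inequality for `η` gives
`H_{n+1} - H_n ≥ -∫ log J dμ`; conversely, for large `n` the function `J(q·)` varies on `[w]` by at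
most a factor `e^ε`, so that `H_{n+1} - H_n ≤ -∫ log J dμ + ε`.
-/

namespace GS

section Compact

variable {X ι E : Type*} [MeasurableSpace X] [NormedAddCommGroup E]

lemma integrable_of_continuous [TopologicalSpace X] [CompactSpace X] [OpensMeasurableSpace X]
    [SecondCountableTopologyEither X E] {μ : Measure X} [IsFiniteMeasureOnCompacts μ]
    {f : X → E} (hf : Continuous f) : Integrable f μ :=
  hf.integrable_of_hasCompactSupport (.of_compactSpace f)

lemma tendsto_integral_of_tendstoUniformly [NormedSpace ℝ E] {l : Filter ι}
    {μs : ι → Measure X} [∀ i, IsProbabilityMeasure (μs i)] {F : ι → X → E} {f : X → E} {c : E}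
    (hF : ∀ i, Integrable (F i) (μs i)) (hf : ∀ i, Integrable f (μs i))
    (hFf : TendstoUniformly F f l) (hc : Tendsto (fun i ↦ ∫ x, f x ∂μs i) l (𝓝 c)) :
    Tendsto (fun i ↦ ∫ x, F i x ∂μs i) l (𝓝 c) := by
  have hdiff : Tendsto (fun i ↦ ∫ x, F i x ∂μs i - ∫ x, f x ∂μs i) l (𝓝 0) := by
    rw [Metric.tendsto_nhds]
    intro ε hε
    filter_upwards [Metric.tendstoUniformly_iff.1 hFf (ε / 2) (half_pos hε)] with i hi
    have hle : ‖∫ x, (F i x - f x) ∂μs i‖ ≤ ε / 2 * (μs i).real univ :=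
      norm_integral_le_of_norm_le_const <| .of_forall fun x ↦ by
        rw [← dist_eq_norm, dist_comm]
        exact (hi x).le
    rw [probReal_univ, mul_one] at hle
    rw [dist_zero_right, ← integral_sub (hF i) (hf i)]
    exact hle.trans_lt (half_lt_self hε)
  simpa only [sub_add_cancel, zero_add] using hdiff.add hc

lemma tendsto_probabilityMeasure_iff [TopologicalSpace X] [CompactSpace X]
    [OpensMeasurableSpace X] {l : Filter ι} {μs : ι → ProbabilityMeasure X}
    {μ : ProbabilityMeasure X} :
    Tendsto μs l (𝓝 μ) ↔ ∀ f : X → ℝ, Continuous f →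
      Tendsto (fun i ↦ ∫ x, f x ∂(μs i : Measure X)) l (𝓝 (∫ x, f x ∂(μ : Measure X))) := by
  rw [ProbabilityMeasure.tendsto_iff_forall_integral_tendsto]
  exact ⟨fun h f hf ↦ h (.mkOfCompact ⟨f, hf⟩), fun h f ↦ h f f.continuous⟩

end Compact

section JensenGap

variable {X : Type*} [MeasurableSpace X] {μ : Measure X} {s : Set X} {f : X → ℝ}

lemma setIntegral_negMulLog_le (hs : MeasurableSet s) (hμs : μ s ≠ ⊤) (hf₀ : ∀ x ∈ s, 0 ≤ f x)
    (hf : IntegrableOn f s μ) (hlog : IntegrableOn (fun x ↦ negMulLog (f x)) s μ) :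
    ∫ x in s, negMulLog (f x) ∂μ ≤ μ.real s * negMulLog (⨍ x in s, f x ∂μ) := by
  rcases eq_or_ne (μ s) 0 with hμ₀ | hμ₀
  · simp only [Measure.restrict_eq_zero.2 hμ₀, integral_zero_measure, measureReal_def, hμ₀,
      ENNReal.toReal_zero, zero_mul, le_refl]
  rw [← measure_smul_setAverage _ hμs, smul_eq_mul]
  gcongr
  exact concaveOn_negMulLog.le_map_set_average continuous_negMulLog.continuousOn isClosed_Ici hμ₀
    hμs ((ae_restrict_iff' hs).2 (.of_forall hf₀)) hf hlog

lemma measureReal_mul_negMulLog_setAverage_le {ε : ℝ} (hs : MeasurableSet s) (hμs : μ s ≠ ⊤)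
    (hf₀ : ∀ x ∈ s, 0 < f x) (hε : ∀ x ∈ s, ∀ y ∈ s, f x ≤ exp ε * f y)
    (hf : IntegrableOn f s μ) (hlog : IntegrableOn (fun x ↦ negMulLog (f x)) s μ) :
    μ.real s * negMulLog (⨍ x in s, f x ∂μ) ≤ ∫ x in s, (negMulLog (f x) + ε * f x) ∂μ := by
  rcases eq_or_ne (μ s) 0 with hμ₀ | hμ₀
  · simp only [Measure.restrict_eq_zero.2 hμ₀, integral_zero_measure, measureReal_def, hμ₀,
      ENNReal.toReal_zero, zero_mul, le_refl]
  obtain ⟨y, hy, hy_le⟩ := exists_le_setAverage hμ₀ hμs hf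
  have hint := measure_smul_setAverage f hμs
  set A := ⨍ x in s, f x ∂μ
  have hA : 0 < A := (hf₀ y hy).trans_le hy_le
  have hlog_le : ∀ x ∈ s, log (f x) ≤ ε + log A := fun x hx ↦ by
    rw [log_le_iff_le_exp (hf₀ x hx), exp_add, exp_log hA]
    exact (hε x hx y hy).trans (by gcongr)
  calc μ.real s * negMulLog A = ∫ x in s, f x * -log A ∂μ := by
        rw [integral_mul_const, ← hint, negMulLog, smul_eq_mul]; ring
    _ ≤ ∫ x in s, (negMulLog (f x) + ε * f x) ∂μ := by
        refine setIntegral_mono_on (hf.mul_const _) (hlog.add (hf.const_mul _)) hs fun x hx ↦ ?_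
        have := mul_le_mul_of_nonneg_left (hlog_le x hx) (hf₀ x hx).le
        rw [negMulLog]
        linarith

end JensenGap

section Increments

lemma iInf_div_succ_eq_of_tendsto_sub {u : ℕ → ℝ} {h : ℝ} (hu₀ : u 0 = 0)
    (hle : ∀ n, h ≤ u (n + 1) - u n) (hlim : Tendsto (fun n ↦ u (n + 1) - u n) atTop (𝓝 h)) :
    ⨅ n : ℕ, u (n + 1) / (n + 1) = h := by
  have hle_div (n : ℕ) : h ≤ u (n + 1) / (n + 1) := by
    have hsum := Finset.card_nsmul_le_sum (Finset.range (n + 1)) _ h fun i _ ↦ hle i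
    rw [Finset.sum_range_sub, hu₀, Finset.card_range, nsmul_eq_mul, sub_zero] at hsum
    rw [le_div_iff₀ (by positivity), mul_comm]
    exact_mod_cast hsum
  have hlim_div : Tendsto (fun n : ℕ ↦ u (n + 1) / ((n : ℝ) + 1)) atTop (𝓝 h) := by
    refine (hlim.cesaro.comp (tendsto_add_atTop_nat 1)).congr fun n ↦ ?_
    rw [Function.comp_apply, Finset.sum_range_sub, hu₀, sub_zero, inv_mul_eq_div, Nat.cast_succ]
  have hbdd : BddBelow (range fun n : ℕ ↦ u (n + 1) / ((n : ℝ) + 1)) :=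
    ⟨h, forall_mem_range.2 hle_div⟩
  exact le_antisymm (ge_of_tendsto' hlim_div fun n ↦ ciInf_le hbdd n) (le_ciInf hle_div)

end Increments

section Ruelle

variable {𝒜 : Type} {E F : Type*}

@[fun_prop]
lemma continuous_cons [TopologicalSpace 𝒜] (q : 𝒜) : Continuous (cons q) := by
  refine continuous_pi fun n ↦ ?_
  cases n with
  | zero => exact continuous_const
  | succ n => exact continuous_apply n

lemma integrable_comp_cons [Finite 𝒜] [TopologicalSpace 𝒜] [DiscreteTopology 𝒜]
    [MeasurableSpace 𝒜] [BorelSpace 𝒜] [NormedAddCommGroup E] {μ : Measure (Omega 𝒜)}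
    [IsFiniteMeasure μ] {φ : Omega 𝒜 → E} (hφ : Continuous φ) (q : 𝒜) :
    Integrable (fun x ↦ φ (cons q x)) μ :=
  integrable_of_continuous (hφ.comp (continuous_cons q))

lemma map_ruelle [Fintype 𝒜] [AddCommMonoid E] [Module ℝ E] [AddCommMonoid F] [Module ℝ F]
    (L : E →ₗ[ℝ] F) (f : Omega 𝒜 → ℝ) (φ : Omega 𝒜 → E) (x : Omega 𝒜) :
    L (ruelle f φ x) = ruelle f (fun y ↦ L (φ y)) x := by
  simp only [ruelle, map_sum, map_smul]

variable [Fintype 𝒜] [TopologicalSpace 𝒜] [NormedAddCommGroup E] [NormedSpace ℝ E]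
  {f : Omega 𝒜 → ℝ}

lemma continuous_ruelle {φ : Omega 𝒜 → E} (hf : Continuous f) (hφ : Continuous φ) :
    Continuous (ruelle f φ) :=
  continuous_finsetSum _ fun q _ ↦
    (hf.comp (continuous_cons q)).rexp.smul (hφ.comp (continuous_cons q))

lemma tendstoUniformly_ruelle [CompactSpace 𝒜] {ι : Type*} {l : Filter ι} {F : ι → Omega 𝒜 → ℝ}
    {φ : Omega 𝒜 → E} (hf : Continuous f) (hF : ∀ i, Continuous (F i)) (hφ : Continuous φ)
    (hFf : TendstoUniformly F f l) :
    TendstoUniformly (fun i ↦ ruelle (F i) φ) (ruelle f φ) l := by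
  let T : C(C(Omega 𝒜, ℝ), C(Omega 𝒜, E)) :=
    ContinuousMap.curry ⟨fun p ↦ ruelle p.1 φ p.2, by unfold ruelle; fun_prop⟩
  have hlim : Tendsto (fun i ↦ (⟨F i, hF i⟩ : C(Omega 𝒜, ℝ))) l (𝓝 ⟨f, hf⟩) :=
    ContinuousMap.tendsto_iff_tendstoUniformly.2 hFf
  exact ContinuousMap.tendsto_iff_tendstoUniformly.1 ((T.continuous.tendsto _).comp hlim)

end Ruelle

section GMeasure

variable {𝒜 : Type} [Fintype 𝒜] [TopologicalSpace 𝒜] {J : Omega 𝒜 → ℝ}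

lemma IsGFunction.continuous_log (hJ : IsGFunction J) : Continuous fun z ↦ log (J z) :=
  hJ.1.log fun x ↦ (hJ.2.1 x).ne'

lemma IsGFunction.ruelle_log {E : Type*} [AddCommMonoid E] [Module ℝ E] (hJ : IsGFunction J)
    (φ : Omega 𝒜 → E) (x : Omega 𝒜) :
    ruelle (fun z ↦ log (J z)) φ x = ∑ q, J (cons q x) • φ (cons q x) :=
  Finset.sum_congr rfl fun q _ ↦ by rw [exp_log (hJ.2.1 _)]

variable [DiscreteTopology 𝒜] [MeasurableSpace 𝒜] [BorelSpace 𝒜] {μ : Measure (Omega 𝒜)}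

lemma isGMeasure_iff_forall_real [IsProbabilityMeasure μ] (hJ : Continuous fun z ↦ log (J z)) :
    IsGMeasure J μ ↔ ∀ φ : Omega 𝒜 → ℝ, Continuous φ →
      ∫ x, ruelle (fun z ↦ log (J z)) φ x ∂μ = ∫ x, φ x ∂μ := by
  refine ⟨fun hμ φ hφ ↦ ?_, fun h ↦ ⟨inferInstance, fun φ hφ ↦ ?_⟩⟩
  · have hcomplex := hμ.2 (fun x ↦ (φ x : ℂ)) (Complex.continuous_ofReal.comp hφ)
    have hruelle (x : Omega 𝒜) := map_ruelle Complex.ofRealCLM.toLinearMap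
      (fun z ↦ log (J z)) φ x
    simp only [ContinuousLinearMap.coe_coe, Complex.ofRealCLM_apply] at hruelle
    simp only [← hruelle, integral_complex_ofReal] at hcomplex
    exact_mod_cast hcomplex
  · have hcomp (L : ℂ →L[ℝ] ℝ) : L (∫ x, ruelle (fun z ↦ log (J z)) φ x ∂μ) =
        L (∫ x, φ x ∂μ) := by
      rw [← L.integral_comp_comm (integrable_of_continuous (continuous_ruelle hJ hφ)),
        ← L.integral_comp_comm (integrable_of_continuous hφ),
        ← h (fun x ↦ L (φ x)) (L.continuous.comp hφ)]
      exact integral_congr_ae (.of_forall (map_ruelle L.toLinearMap _ φ))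
    exact Complex.ext (hcomp Complex.reCLM) (hcomp Complex.imCLM)

lemma IsGMeasure.integral_ruelle (hμ : IsGMeasure J μ) (hJ : Continuous fun z ↦ log (J z))
    {φ : Omega 𝒜 → ℝ} (hφ : Continuous φ) :
    ∫ x, ruelle (fun z ↦ log (J z)) φ x ∂μ = ∫ x, φ x ∂μ :=
  have := hμ.1
  (isGMeasure_iff_forall_real hJ).1 hμ φ hφ

section Limits

variable {ι : Type*} {l : Filter ι} {Js : ι → Omega 𝒜 → ℝ}
  {μs : ι → ProbabilityMeasure (Omega 𝒜)} {ν : ProbabilityMeasure (Omega 𝒜)}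

lemma isGMeasure_of_tendsto [l.NeBot] (hJ : Continuous fun z ↦ log (J z))
    (hJs : ∀ i, Continuous fun z ↦ log (Js i z)) (hμs : ∀ i, IsGMeasure (Js i) (μs i))
    (hconv : TendstoUniformly (fun i z ↦ log (Js i z)) (fun z ↦ log (J z)) l)
    (hν : Tendsto μs l (𝓝 ν)) : IsGMeasure J ν := by
  rw [tendsto_probabilityMeasure_iff] at hν
  refine (isGMeasure_iff_forall_real hJ).2 fun φ hφ ↦ ?_
  have hcont := continuous_ruelle hJ hφ
  have hlim : Tendsto (fun i ↦ ∫ x, ruelle (fun z ↦ log (Js i z)) φ x ∂(μs i : Measure (Omega 𝒜)))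
      l (𝓝 (∫ x, ruelle (fun z ↦ log (J z)) φ x ∂(ν : Measure (Omega 𝒜)))) :=
    tendsto_integral_of_tendstoUniformly
      (fun i ↦ integrable_of_continuous (continuous_ruelle (hJs i) hφ))
      (fun _ ↦ integrable_of_continuous hcont) (tendstoUniformly_ruelle hJ hJs hφ hconv)
      (hν _ hcont)
  simp only [fun i ↦ (hμs i).integral_ruelle (hJs i) hφ] at hlim
  exact tendsto_nhds_unique hlim (hν φ hφ)

lemma tendsto_of_unique_isGMeasure (hJ : Continuous fun z ↦ log (J z))
    (huniq : ∀ ν' : ProbabilityMeasure (Omega 𝒜), IsGMeasure J ν' → ν' = ν)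
    (hJs : ∀ i, Continuous fun z ↦ log (Js i z)) (hμs : ∀ i, IsGMeasure (Js i) (μs i))
    (hconv : TendstoUniformly (fun i z ↦ log (Js i z)) (fun z ↦ log (J z)) l) :
    Tendsto μs l (𝓝 ν) := by
  refine tendsto_nhds_of_unique_mapClusterPt fun ν' hν' ↦ huniq ν' ?_
  obtain ⟨U, hUl, hU⟩ := mapClusterPt_iff_ultrafilter.1 hν'
  exact isGMeasure_of_tendsto hJ hJs hμs (fun V hV ↦ hUl (hconv V hV)) hU

end Limits

end GMeasure

section Cylinders

variable {𝒜 : Type} {n : ℕ}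

lemma cons_mem_cyl_cons_iff {q r : 𝒜} {w : Fin n → 𝒜} {x : Omega 𝒜} :
    cons r x ∈ cyl (Fin.cons q w : Fin (n + 1) → 𝒜) ↔ r = q ∧ x ∈ cyl w := by
  simp only [cyl, mem_ofPred_eq, Fin.forall_fin_succ, Fin.cons_zero, Fin.cons_succ]
  rfl

lemma iUnion_cyl : ⋃ w : Fin n → 𝒜, cyl w = univ :=
  eq_univ_of_forall fun x ↦ mem_iUnion.2 ⟨fun i ↦ x i, fun _ ↦ rfl⟩

lemma pairwise_disjoint_cyl : Pairwise (Function.onFun Disjoint (cyl (𝒜 := 𝒜) (k := n))) :=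
  fun _ _ hvw ↦ Set.disjoint_left.2 fun _ hv hw ↦ hvw (funext fun i ↦ (hv i).symm.trans (hw i))

lemma cyl_eq_iInter (w : Fin n → 𝒜) : cyl w = ⋂ i : Fin n, (fun x : Omega 𝒜 ↦ x i) ⁻¹' {w i} := by
  ext x
  simp only [cyl, mem_ofPred_eq, mem_iInter, mem_preimage, mem_singleton_iff]

lemma isClopen_cyl [TopologicalSpace 𝒜] [DiscreteTopology 𝒜] (w : Fin n → 𝒜) :
    IsClopen (cyl w) := by
  rw [cyl_eq_iInter]
  exact isClopen_iInter_of_finite fun i ↦ (isClopen_discrete _).preimage (continuous_apply _)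

lemma measurableSet_cyl [MeasurableSpace 𝒜] [MeasurableSingletonClass 𝒜] (w : Fin n → 𝒜) :
    MeasurableSet (cyl w) := by
  rw [cyl_eq_iInter]
  exact .iInter fun i ↦ measurable_pi_apply _ (measurableSet_singleton _)

lemma sum_setIntegral_cyl [Fintype 𝒜] [MeasurableSpace 𝒜] [MeasurableSingletonClass 𝒜]
    {E : Type*} [NormedAddCommGroup E] [NormedSpace ℝ E] {μ : Measure (Omega 𝒜)}
    {f : Omega 𝒜 → E} (hf : Integrable f μ) :
    ∑ w : Fin n → 𝒜, ∫ x in cyl w, f x ∂μ = ∫ x, f x ∂μ := by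
  rw [← integral_iUnion_fintype measurableSet_cyl pairwise_disjoint_cyl
    fun _ ↦ hf.integrableOn, iUnion_cyl, setIntegral_univ]

lemma exists_forall_dist_lt_of_forall_lt_eq [Finite 𝒜] [TopologicalSpace 𝒜] [DiscreteTopology 𝒜]
    {E : Type*} [PseudoMetricSpace E] {f : Omega 𝒜 → E} (hf : Continuous f) {ε : ℝ} (hε : 0 < ε) :
    ∃ N : ℕ, ∀ x y : Omega 𝒜, (∀ i < N, x i = y i) → dist (f x) (f y) < ε := by
  let _ : MetricSpace (Omega 𝒜) := PiNat.metricSpace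
  obtain ⟨δ, hδ, hfδ⟩ :=
    Metric.uniformContinuous_iff.1 (CompactSpace.uniformContinuous_of_continuous hf) ε hε
  obtain ⟨N, hN⟩ := exists_pow_lt_of_lt_one hδ one_half_lt_one
  exact ⟨N, fun x y hxy ↦ hfδ ((PiNat.mem_cylinder_iff_dist_le.1 hxy).trans_lt hN)⟩

end Cylinders

section Entropy

variable {𝒜 : Type} [Fintype 𝒜]

lemma blockEntropy_zero [MeasurableSpace 𝒜] (μ : Measure (Omega 𝒜)) [IsProbabilityMeasure μ] :
    blockEntropy μ 0 = 0 := by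
  have hcyl (w : Fin 0 → 𝒜) : cyl w = univ := eq_univ_of_forall fun _ i ↦ i.elim0
  simp only [blockEntropy, hcyl, measure_univ, ENNReal.toReal_one, negMulLog_one,
    Finset.sum_const_zero]

variable [TopologicalSpace 𝒜] {J : Omega 𝒜 → ℝ}

lemma IsGFunction.eventually_le_exp_mul_of_mem_cyl [DiscreteTopology 𝒜] (hJ : IsGFunction J)
    {ε : ℝ} (hε : 0 < ε) :
    ∀ᶠ n in atTop, ∀ (w : Fin n → 𝒜) (q : 𝒜), ∀ x ∈ cyl w, ∀ y ∈ cyl w,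
      J (cons q x) ≤ exp ε * J (cons q y) := by
  obtain ⟨N, hN⟩ := exists_forall_dist_lt_of_forall_lt_eq hJ.continuous_log hε
  filter_upwards [eventually_ge_atTop N] with n hn w q x hx y hy
  have hagree : ∀ i < N, cons q x i = cons q y i := fun i hi ↦ by
    cases i with
    | zero => rfl
    | succ i => exact (hx ⟨i, by omega⟩).trans (hy ⟨i, by omega⟩).symm
  have hdist := (abs_sub_lt_iff.1 (hN _ _ hagree)).1
  rw [← log_le_log_iff (hJ.2.1 _) (mul_pos (exp_pos ε) (hJ.2.1 _)),
    log_mul (exp_pos ε).ne' (hJ.2.1 _).ne', log_exp]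
  linarith

variable [DiscreteTopology 𝒜] [MeasurableSpace 𝒜] [BorelSpace 𝒜] {μ : Measure (Omega 𝒜)}

namespace IsGMeasure

lemma measureReal_cyl_cons (hμ : IsGMeasure J μ) (hJ : IsGFunction J) {n : ℕ} (q : 𝒜)
    (w : Fin n → 𝒜) :
    μ.real (cyl (Fin.cons q w : Fin (n + 1) → 𝒜)) = ∫ x in cyl w, J (cons q x) ∂μ := by
  let χ : Omega 𝒜 → ℝ := (cyl (Fin.cons q w : Fin (n + 1) → 𝒜)).indicator 1
  have hχ : Continuous χ := (isClopen_cyl _).continuous_indicator continuous_one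
  have hruelle (x : Omega 𝒜) : ruelle (fun z ↦ log (J z)) χ x =
      (cyl w).indicator (fun x ↦ J (cons q x)) x := by
    rw [hJ.ruelle_log, Finset.sum_eq_single_of_mem q (Finset.mem_univ q) fun r _ hr ↦ ?_]
    · simp [χ, indicator_apply, cons_mem_cyl_cons_iff]
    · simp [χ, cons_mem_cyl_cons_iff, hr]
  rw [← integral_indicator_one (measurableSet_cyl _), ← hμ.integral_ruelle hJ.continuous_log hχ,
    integral_congr_ae (.of_forall hruelle), integral_indicator (measurableSet_cyl w)]

lemma sum_sum_setIntegral_cyl (hμ : IsGMeasure J μ) (hJ : IsGFunction J) (n : ℕ)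
    {φ : Omega 𝒜 → ℝ} (hφ : Continuous φ) :
    ∑ w : Fin n → 𝒜, ∑ q, ∫ x in cyl w, J (cons q x) * φ (cons q x) ∂μ = ∫ x, φ x ∂μ := by
  have := hμ.1
  have hint (q : 𝒜) : Integrable (fun x ↦ J (cons q x) * φ (cons q x)) μ :=
    integrable_comp_cons (hJ.1.mul hφ) q
  rw [Finset.sum_comm, ← hμ.integral_ruelle hJ.continuous_log hφ]
  simp only [sum_setIntegral_cyl (hint _), hJ.ruelle_log, smul_eq_mul]
  exact (integral_finsetSum _ fun q _ ↦ hint q).symm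

lemma blockEntropy_succ_sub (hμ : IsGMeasure J μ) (hJ : IsGFunction J) (n : ℕ) :
    blockEntropy μ (n + 1) - blockEntropy μ n =
      ∑ w : Fin n → 𝒜, ∑ q, μ.real (cyl w) * negMulLog (⨍ x in cyl w, J (cons q x) ∂μ) := by
  have := hμ.1
  have hmul (w : Fin n → 𝒜) (q : 𝒜) :
      μ.real (cyl w) * ⨍ x in cyl w, J (cons q x) ∂μ = ∫ x in cyl w, J (cons q x) ∂μ :=
    measure_smul_setAverage _ (measure_ne_top _ _)
  have hsum (w : Fin n → 𝒜) :
      μ.real (cyl w) * ∑ q, ⨍ x in cyl w, J (cons q x) ∂μ = μ.real (cyl w) := by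
    simp only [Finset.mul_sum, hmul]
    rw [← integral_finsetSum _ fun q _ ↦ (integrable_comp_cons hJ.1 q).integrableOn]
    simp only [hJ.2.2, setIntegral_const, smul_eq_mul, mul_one]
  have hsucc : blockEntropy μ (n + 1) =
      ∑ w : Fin n → 𝒜, ∑ q, negMulLog (μ.real (cyl w) * ⨍ x in cyl w, J (cons q x) ∂μ) := by
    simp only [hmul, ← hμ.measureReal_cyl_cons hJ]
    rw [← Fintype.sum_prod_type_right']
    exact (Equiv.sum_comp (Fin.consEquiv fun _ ↦ 𝒜) _).symm
  rw [hsucc, blockEntropy, ← Finset.sum_sub_distrib]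
  refine Finset.sum_congr rfl fun w _ ↦ ?_
  simp only [negMulLog_mul, Finset.sum_add_distrib, ← Finset.sum_mul]
  rw [← measureReal_def, negMulLog]
  linear_combination -log (μ.real (cyl w)) * hsum w

lemma neg_integral_log_le_blockEntropy_sub (hμ : IsGMeasure J μ) (hJ : IsGFunction J) (n : ℕ) :
    -∫ x, log (J x) ∂μ ≤ blockEntropy μ (n + 1) - blockEntropy μ n := by
  have := hμ.1
  rw [hμ.blockEntropy_succ_sub hJ, ← integral_neg,
    ← hμ.sum_sum_setIntegral_cyl hJ n (φ := fun x ↦ -log (J x)) hJ.continuous_log.neg]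
  refine Finset.sum_le_sum fun w _ ↦ Finset.sum_le_sum fun q _ ↦ ?_
  simp only [mul_neg, ← neg_mul]
  exact setIntegral_negMulLog_le (measurableSet_cyl w) (measure_ne_top _ _)
    (fun x _ ↦ (hJ.2.1 _).le) (integrable_comp_cons hJ.1 q).integrableOn
    (integrable_comp_cons (continuous_negMulLog.comp hJ.1) q).integrableOn

lemma eventually_blockEntropy_sub_le (hμ : IsGMeasure J μ) (hJ : IsGFunction J) {ε : ℝ}
    (hε : 0 < ε) :
    ∀ᶠ n in atTop, blockEntropy μ (n + 1) - blockEntropy μ n ≤ -∫ x, log (J x) ∂μ + ε := by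
  have := hμ.1
  filter_upwards [hJ.eventually_le_exp_mul_of_mem_cyl hε] with n hn
  have hlog : Continuous fun x ↦ -log (J x) := hJ.continuous_log.neg
  have hint : ∫ x, (-log (J x) + ε) ∂μ = -∫ x, log (J x) ∂μ + ε := by
    rw [integral_add (integrable_of_continuous hlog) (integrable_const ε), integral_neg,
      integral_const, probReal_univ, one_smul]
  rw [hμ.blockEntropy_succ_sub hJ, ← hint,
    ← hμ.sum_sum_setIntegral_cyl hJ n (φ := fun x ↦ -log (J x) + ε)
      (hlog.add continuous_const)]
  refine Finset.sum_le_sum fun w _ ↦ Finset.sum_le_sum fun q _ ↦ ?_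
  refine (measureReal_mul_negMulLog_setAverage_le (measurableSet_cyl w) (measure_ne_top _ _)
    (fun x _ ↦ hJ.2.1 _) (hn w q) (integrable_comp_cons hJ.1 q).integrableOn
    (integrable_comp_cons (continuous_negMulLog.comp hJ.1) q).integrableOn).trans_eq ?_
  refine integral_congr_ae (.of_forall fun x ↦ ?_)
  simp only [negMulLog]
  ring

lemma tendsto_blockEntropy_sub (hμ : IsGMeasure J μ) (hJ : IsGFunction J) :
    Tendsto (fun n ↦ blockEntropy μ (n + 1) - blockEntropy μ n) atTop
      (𝓝 (-∫ x, log (J x) ∂μ)) := by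
  refine tendsto_order.2 ⟨fun a ha ↦ .of_forall fun n ↦
    ha.trans_le (hμ.neg_integral_log_le_blockEntropy_sub hJ n), fun a ha ↦ ?_⟩
  filter_upwards [hμ.eventually_blockEntropy_sub_le hJ (half_pos (sub_pos.2 ha))] with n hn
  linarith

theorem KSentropy_eq (hμ : IsGMeasure J μ) (hJ : IsGFunction J) :
    KSentropy μ = -∫ x, log (J x) ∂μ :=
  have := hμ.1
  iInf_div_succ_eq_of_tendsto_sub (blockEntropy_zero μ)
    (hμ.neg_integral_log_le_blockEntropy_sub hJ) (hμ.tendsto_blockEntropy_sub hJ)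

end IsGMeasure

end Entropy

theorem statement18_general {ι : Type*} {l : Filter ι} {𝒜 : Type} [Fintype 𝒜] [TopologicalSpace 𝒜]
    [DiscreteTopology 𝒜] [MeasurableSpace 𝒜] [BorelSpace 𝒜]
    {J : Omega 𝒜 → ℝ} (hJ : IsGFunction J)
    {μ : Measure (Omega 𝒜)} (hμ : IsGMeasure J μ)
    (huniq : ∀ ν : Measure (Omega 𝒜), IsGMeasure J ν → ν = μ)
    {Js : ι → Omega 𝒜 → ℝ} (hJs : ∀ i, IsGFunction (Js i))
    {μs : ι → Measure (Omega 𝒜)} (hμs : ∀ i, IsGMeasure (Js i) (μs i))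
    (hconv : TendstoUniformly (fun i z ↦ log (Js i z)) (fun z ↦ log (J z)) l) :
    (∀ φ : Omega 𝒜 → ℝ, Continuous φ →
      Tendsto (fun i ↦ ∫ z, φ z ∂(μs i)) l (𝓝 (∫ z, φ z ∂μ))) ∧
    Tendsto (fun i ↦ KSentropy (μs i)) l (𝓝 (KSentropy μ)) := by
  have hprob (i : ι) := (hμs i).1
  have hweak : ∀ φ : Omega 𝒜 → ℝ, Continuous φ →
      Tendsto (fun i ↦ ∫ z, φ z ∂(μs i)) l (𝓝 (∫ z, φ z ∂μ)) :=
    tendsto_probabilityMeasure_iff.1 <|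
      tendsto_of_unique_isGMeasure (μs := fun i ↦ ⟨μs i, hprob i⟩) (ν := ⟨μ, hμ.1⟩)
        hJ.continuous_log (fun ν hν ↦ Subtype.ext (huniq ν hν))
        (fun i ↦ (hJs i).continuous_log) hμs hconv
  refine ⟨hweak, ?_⟩
  simp only [hμ.KSentropy_eq hJ, fun i ↦ (hμs i).KSentropy_eq (hJs i)]
  exact (tendsto_integral_of_tendstoUniformly
    (fun i ↦ integrable_of_continuous (hJs i).continuous_log)
    (fun _ ↦ integrable_of_continuous hJ.continuous_log) hconv
    (hweak _ hJ.continuous_log)).neg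

/-- continuity of `g`-measures and of the entropy, used in Theorem
`teo-spec-trip-walters` of the paper.
If `log J` is in the Walters class with unique `g`-measure `μ`, and `J_n` are `g`-functions
with `log J_n` `α_n`-Hölder, with unique `g`-measures `μ_n`, and `‖log J_n − log J‖_∞ → 0`,
then `μ_n → μ` weakly-* and `h_{μ_n}(σ) → h_μ(σ)`. -/
theorem statement18 {𝒜 : Type} [Fintype 𝒜] [TopologicalSpace 𝒜] [DiscreteTopology 𝒜]
    [MeasurableSpace 𝒜] [BorelSpace 𝒜] (hcard : 2 ≤ Fintype.card 𝒜)
    (J : Omega 𝒜 → ℝ) (hJ : IsGFunction J)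
    (hW : WaltersClass (fun z => Real.log (J z)))
    (μ : Measure (Omega 𝒜)) (hμ : IsGMeasure J μ)
    (huniq : ∀ ν : Measure (Omega 𝒜), IsGMeasure J ν → ν = μ)
    (Jn : ℕ → Omega 𝒜 → ℝ) (hJn : ∀ n, IsGFunction (Jn n))
    (αn : ℕ → ℝ) (hαn : ∀ n, αn n ∈ Set.Ioo (0 : ℝ) 1)
    (hHoln : ∀ n, IsHolderW (αn n) (fun z => Real.log (Jn n z)))
    (μn : ℕ → Measure (Omega 𝒜)) (hμn : ∀ n, IsGMeasure (Jn n) (μn n))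
    (huniqn : ∀ n, ∀ ν : Measure (Omega 𝒜), IsGMeasure (Jn n) ν → ν = μn n)
    (hconv : TendstoUniformly (fun n z => Real.log (Jn n z))
      (fun z => Real.log (J z)) atTop) :
    (∀ φ : Omega 𝒜 → ℝ, Continuous φ →
      Tendsto (fun n => ∫ z, φ z ∂(μn n)) atTop (𝓝 (∫ z, φ z ∂μ))) ∧
    Tendsto (fun n => KSentropy (μn n)) atTop (𝓝 (KSentropy μ)) :=
  statement18_general hJ hμ huniq hJn hμn hconv

end GS
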